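/- Let (M,𝒳) be a small n-exact category and Y : Y⁰ → Y¹ → ⋯ → Yⁿ → Y^{n+1} a complex in M such that every homology object of the complex 0 → H_{Y⁰} → H_{Y¹} → ⋯ → H_{Yⁿ} → H_{Y^{n+1}} → 0 of representable functors in Mod(M) is weakly effaceable (equivalently, the induced sequence is exact in the localization of Mod(M) at the weakly effaceable functors). Then Y is an 𝒳-admissible n-exact sequence, i.e., Y ∈ 𝒳. -/

import Mathlib

open CategoryTheory CategoryTheory.Limits Opposite

attribute [local instance] CategoryTheory.Limits.hasBinaryBiproducts_of_finite_biproducts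

universe u

namespace NExactCat

variable {M : Type u} [SmallCategory M] [Preadditive M] [HasFiniteBiproducts M]

/-- A sequence (`ℕ`-indexed, only the indices `0, …, n+1` of the objects and `0, …, n` of the
maps being relevant) of composable morphisms in an additive category. -/
structure NSeq (M : Type u) [SmallCategory M] where
  X : ℕ → M
  d : ∀ i, X i ⟶ X (i + 1)

/-- `S` is a complex (in degrees `0, …, n+1`). -/
def NSeq.IsComplex (n : ℕ) (S : NSeq M) : Prop :=
  ∀ i, i + 1 ≤ n → S.d i ≫ S.d (i + 1) = 0

/-- `(d¹,…,dⁿ)` is an `n`-cokernel of `d⁰`: for every `W` the sequence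
`0 → Hom(X^{n+1},W) → Hom(Xⁿ,W) → ⋯ → Hom(X⁰,W)` of abelian groups is exact. -/
def RightNExact (n : ℕ) (S : NSeq M) : Prop :=
  (∀ W : M, Function.Injective fun g : S.X (n + 1) ⟶ W => S.d n ≫ g) ∧
  (∀ W : M, ∀ i, i < n → Function.Exact
      (fun g : S.X (i + 2) ⟶ W => S.d (i + 1) ≫ g)
      (fun g : S.X (i + 1) ⟶ W => S.d i ≫ g))

/-- `(d⁰,…,d^{n-1})` is an `n`-kernel of `dⁿ`: for every `W` the sequence
`0 → Hom(W,X⁰) → Hom(W,X¹) → ⋯ → Hom(W,X^{n+1})` of abelian groups is exact. -/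
def LeftNExact (n : ℕ) (S : NSeq M) : Prop :=
  (∀ W : M, Function.Injective fun g : W ⟶ S.X 0 => g ≫ S.d 0) ∧
  (∀ W : M, ∀ i, i < n → Function.Exact
      (fun g : W ⟶ S.X i => g ≫ S.d i)
      (fun g : W ⟶ S.X (i + 1) => g ≫ S.d (i + 1)))

/-- An `n`-exact sequence: a complex which is both a left and a right `n`-exact sequence. -/
def IsNExactSeq (n : ℕ) (S : NSeq M) : Prop :=
  S.IsComplex n ∧ LeftNExact n S ∧ RightNExact n S

/-- `f` is a morphism of complexes `S ⟶ T` (in degrees `0, …, n+1`). -/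
def IsNSeqHom (n : ℕ) (S T : NSeq M) (f : ∀ i, S.X i ⟶ T.X i) : Prop :=
  ∀ i, i ≤ n → S.d i ≫ f (i + 1) = f i ≫ T.d i

/-- There is a weak isomorphism `S ⟶ T`: a morphism of complexes whose components `f k` and
`f (k+1)` are isomorphisms for some `k ∈ {0,…,n+1}`, indices taken modulo `n+2`. -/
def ExistsWeakIso (n : ℕ) (S T : NSeq M) : Prop :=
  ∃ f : ∀ i, S.X i ⟶ T.X i, IsNSeqHom n S T f ∧
    ((∃ k ≤ n, IsIso (f k) ∧ IsIso (f (k + 1))) ∨ (IsIso (f (n + 1)) ∧ IsIso (f 0)))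

/-- The objects of the mapping cone `X⁰ → X¹ ⊞ Y⁰ → ⋯ → Xⁿ ⊞ Y^{n-1} → Yⁿ` of a morphism of
complexes indexed by `0, …, n`. -/
noncomputable def coneX (n : ℕ) (S T : NSeq M) (i : ℕ) : M :=
  if i = 0 then S.X 0 else if i ≤ n then S.X i ⊞ T.X (i - 1) else T.X n

lemma coneX_zero (n : ℕ) (S T : NSeq M) : coneX n S T 0 = S.X 0 := by simp [coneX]

lemma coneX_mid (n : ℕ) (S T : NSeq M) {i : ℕ} (h0 : i ≠ 0) (h1 : i ≤ n) :
    coneX n S T i = (S.X i ⊞ T.X (i - 1)) := by simp [coneX, h0, h1]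

lemma coneX_top (n : ℕ) (S T : NSeq M) {i : ℕ} (h : n < i) :
    coneX n S T i = T.X n := by
  have h0 : i ≠ 0 := by omega
  have h1 : ¬ i ≤ n := by omega
  simp [coneX, h0, h1]

/-- The differentials of the mapping cone, given in matrix form by
`d_C^k = ((-d_X^{k+1}, 0), (f^{k+1}, d_Y^k))`. -/
noncomputable def coneD (n : ℕ) (S T : NSeq M) (f : ∀ i, S.X i ⟶ T.X i) (i : ℕ) :
    coneX n S T i ⟶ coneX n S T (i + 1) :=
  if h0 : i = 0 then
    (if h1 : 1 ≤ n then
      eqToHom (show coneX n S T i = S.X 0 by subst h0; exact coneX_zero n S T) ≫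
        biprod.lift (-(S.d 0)) (f 0) ≫
        eqToHom (show (S.X 1 ⊞ T.X 0) = coneX n S T (i + 1) by
          subst h0; exact (coneX_mid n S T one_ne_zero h1).symm)
    else 0)
  else if h1 : i + 1 ≤ n then
    eqToHom (coneX_mid n S T h0 (by omega)) ≫
      biprod.lift (biprod.fst ≫ (-(S.d i)))
        (biprod.fst ≫ f i + biprod.snd ≫ (T.d (i - 1) ≫
          eqToHom (congrArg T.X (by omega : i - 1 + 1 = i)))) ≫
      eqToHom ((coneX_mid n S T (Nat.succ_ne_zero i) h1).symm)
  else if h2 : i = n then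
    eqToHom (coneX_mid n S T h0 (by omega)) ≫
      biprod.desc (f i) (T.d (i - 1) ≫ eqToHom (congrArg T.X (by omega : i - 1 + 1 = i))) ≫
      eqToHom (show T.X i = coneX n S T (i + 1) by
        rw [h2]; exact (coneX_top n S T (by omega)).symm)
  else 0

/-- The mapping cone, as an `NSeq`. -/
noncomputable def cone (n : ℕ) (S T : NSeq M) (f : ∀ i, S.X i ⟶ T.X i) : NSeq M :=
  ⟨coneX n S T, coneD n S T f⟩

/-- The diagram determined by `f` is an `n`-pushout: the mapping cone is a right `n`-exact
sequence. -/
def IsNPushout (n : ℕ) (S T : NSeq M) (f : ∀ i, S.X i ⟶ T.X i) : Prop :=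
  RightNExact n (cone n S T f)

/-- The diagram determined by `f` is an `n`-pullback: the mapping cone is a left `n`-exact
sequence. -/
def IsNPullback (n : ℕ) (S T : NSeq M) (f : ∀ i, S.X i ⟶ T.X i) : Prop :=
  LeftNExact n (cone n S T f)

/-- The shift of a sequence, `(shift S).X i = S.X (i+1)`. -/
def NSeq.shift (S : NSeq M) : NSeq M :=
  ⟨fun i => S.X (i + 1), fun i => S.d (i + 1)⟩

/-- `g` is an `𝒳`-admissible monomorphism: it occurs as the first differential of a member
of `𝒳`. -/
def AdmMono (𝒳 : Set (NSeq M)) {A B : M} (g : A ⟶ B) : Prop :=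
  ∃ Z ∈ 𝒳, ∃ (h0 : Z.X 0 = A) (h1 : Z.X 1 = B), Z.d 0 = eqToHom h0 ≫ g ≫ eqToHom h1.symm

/-- `g` is an `𝒳`-admissible epimorphism: it occurs as the last differential of a member
of `𝒳`. -/
def AdmEpi (n : ℕ) (𝒳 : Set (NSeq M)) {A B : M} (g : A ⟶ B) : Prop :=
  ∃ Z ∈ 𝒳, ∃ (h0 : Z.X n = A) (h1 : Z.X (n + 1) = B),
    Z.d n = eqToHom h0 ≫ g ≫ eqToHom h1.symm

/-- `𝒳` is an `n`-exact structure on `M`: a class of `n`-exact sequences, closed under weak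
isomorphisms, satisfying the axioms (E0), (E1), (E1ᵒᵖ), (E2) and (E2ᵒᵖ). -/
structure IsNExactStructure (n : ℕ) (𝒳 : Set (NSeq M)) : Prop where
  /-- members of `𝒳` are `n`-exact sequences -/
  nExact : ∀ Z ∈ 𝒳, IsNExactSeq n Z
  /-- `𝒳` is closed under weak isomorphisms -/
  weakIsoClosed : ∀ Z ∈ 𝒳, ∀ T : NSeq M, IsNExactSeq n T →
      (ExistsWeakIso n Z T ∨ ExistsWeakIso n T Z) → T ∈ 𝒳
  /-- (E0): the zero sequence `0 → 0 → ⋯ → 0` is admissible -/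
  zero_mem : ∃ Z ∈ 𝒳, ∀ i ≤ n + 1, IsZero (Z.X i)
  /-- (E1): admissible monomorphisms are closed under composition -/
  monoComp : ∀ {A B C : M} (g₁ : A ⟶ B) (g₂ : B ⟶ C),
      AdmMono 𝒳 g₁ → AdmMono 𝒳 g₂ → AdmMono 𝒳 (g₁ ≫ g₂)
  /-- (E1ᵒᵖ): admissible epimorphisms are closed under composition -/
  epiComp : ∀ {A B C : M} (g₁ : A ⟶ B) (g₂ : B ⟶ C),
      AdmEpi n 𝒳 g₁ → AdmEpi n 𝒳 g₂ → AdmEpi n 𝒳 (g₁ ≫ g₂)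
  /-- (E2): existence of `n`-pushouts along morphisms out of `X⁰`, with `d_Y⁰` an admissible
  monomorphism -/
  pushout : ∀ Z ∈ 𝒳, ∀ (W : M) (f0 : Z.X 0 ⟶ W),
      ∃ (T : NSeq M) (f : ∀ i, Z.X i ⟶ T.X i) (h : T.X 0 = W),
        f 0 = f0 ≫ eqToHom h.symm ∧
        (∀ i, i + 1 ≤ n → Z.d i ≫ f (i + 1) = f i ≫ T.d i) ∧
        IsNPushout n Z T f ∧ AdmMono 𝒳 (T.d 0)
  /-- (E2ᵒᵖ): existence of `n`-pullbacks along morphisms into `Y^{n+1}`, with `d_X^n` an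
  admissible epimorphism -/
  pullback : ∀ Z ∈ 𝒳, ∀ (A : M) (g : A ⟶ Z.X (n + 1)),
      ∃ (T : NSeq M) (f : ∀ i, T.X i ⟶ Z.X (i + 1)) (h : T.X n = A),
        f n = eqToHom h ≫ g ∧
        (∀ i, i + 1 ≤ n → T.d i ≫ f (i + 1) = f i ≫ Z.d (i + 1)) ∧
        IsNPullback n T Z.shift f ∧ AdmEpi n 𝒳 (T.d (n - 1))

end NExactCat

namespace NExactCat

variable {M : Type u} [SmallCategory M] [Preadditive M] [HasFiniteBiproducts M]

/-- A functor `F ∈ Mod(M)` is weakly effaceable if every element of `F(X)` is killed by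
restriction along some admissible epimorphism `V ⟶ X`. -/
def WeaklyEffaceable (n : ℕ) (𝒳 : Set (NSeq M)) (F : Mᵒᵖ ⥤ AddCommGrpCat.{u}) : Prop :=
  ∀ (X : M) (x : F.obj (op X)), ∃ (V : M) (g : V ⟶ X),
    AdmEpi n 𝒳 g ∧ F.map g.op x = 0

/-- A functor `F ∈ Mod(M)` is `Eff`-closed (lies in `L₁(M)`) if for every admissible `n`-exact
sequence `Z` the sequence `0 → F(Z^{n+1}) → F(Zⁿ) → F(Z^{n-1})` of abelian groups is exact. -/
def EffClosed (n : ℕ) (𝒳 : Set (NSeq M)) (F : Mᵒᵖ ⥤ AddCommGrpCat.{u}) : Prop :=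
  ∀ Z ∈ 𝒳, ∀ j : ℕ, j + 1 = n →
    Function.Injective (fun x : F.obj (op (Z.X (n + 1))) => F.map (Z.d n).op x) ∧
    Function.Exact (fun x : F.obj (op (Z.X (j + 2))) => F.map (Z.d (j + 1)).op x)
      (fun x : F.obj (op (Z.X (j + 1))) => F.map (Z.d j).op x)

/-- A complex `0 → H_A → F¹ → ⋯ → Fⁿ → H_B → 0` in `Mod(M)` whose end terms are the
representable functors of `A` and `B`. -/
structure RepSeq (M : Type u) [SmallCategory M] [Preadditive M] (n : ℕ) (A B : M) where
  F : ℕ → (Mᵒᵖ ⥤ AddCommGrpCat.{u})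
  τ : ∀ i, F i ⟶ F (i + 1)
  hF0 : F 0 = preadditiveYoneda.obj A
  hFtop : F (n + 1) = preadditiveYoneda.obj B
  isComplex : ∀ i, i + 1 ≤ n → τ i ≫ τ (i + 1) = 0

/-- Every homology object of the complex `0 → F 0 → ⋯ → F (n+1) → 0` (homology being
computed objectwise, as in the functor category `Mod(M)`) is weakly effaceable. -/
def RepSeq.HomologyWeaklyEffaceable {n : ℕ} {A B : M} (𝒳 : Set (NSeq M))
    (S : RepSeq M n A B) : Prop :=
  (∀ (X : M) (x : (S.F 0).obj (op X)), (S.τ 0).app (op X) x = 0 →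
    ∃ (V : M) (g : V ⟶ X), AdmEpi n 𝒳 g ∧ (S.F 0).map g.op x = 0) ∧
  (∀ i, i + 1 ≤ n → ∀ (X : M) (x : (S.F (i + 1)).obj (op X)),
    (S.τ (i + 1)).app (op X) x = 0 →
    ∃ (V : M) (g : V ⟶ X), AdmEpi n 𝒳 g ∧
      ∃ y : (S.F i).obj (op V), (S.τ i).app (op V) y = (S.F (i + 1)).map g.op x) ∧
  (∀ (X : M) (x : (S.F (n + 1)).obj (op X)),
    ∃ (V : M) (g : V ⟶ X), AdmEpi n 𝒳 g ∧
      ∃ y : (S.F n).obj (op V), (S.τ n).app (op V) y = (S.F (n + 1)).map g.op x)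

/-- `S` is an `n`-fold extension of `H_B` by `H_A` in the localization of `Mod(M)` at the
weakly effaceable functors: its middle terms are additive and `Eff`-closed, and every homology
object of `S` is weakly effaceable. -/
def RepSeq.Good {n : ℕ} {A B : M} (𝒳 : Set (NSeq M)) (S : RepSeq M n A B) : Prop :=
  (∀ i, 1 ≤ i → i ≤ n → (S.F i).Additive ∧ EffClosed n 𝒳 (S.F i)) ∧
  S.HomologyWeaklyEffaceable 𝒳

/-- A morphism of such complexes restricting to the identity on the two end terms. -/
def RepSeqConnects {n : ℕ} {A B : M} (S T : RepSeq M n A B) : Prop :=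
  ∃ φ : ∀ i, S.F i ⟶ T.F i,
    (∀ i, i ≤ n → S.τ i ≫ φ (i + 1) = φ i ≫ T.τ i) ∧
    φ 0 = eqToHom (S.hF0.trans T.hF0.symm) ∧
    φ (n + 1) = eqToHom (S.hFtop.trans T.hFtop.symm)

/-- One step of the zigzag: both complexes are of the required form and there is a morphism
between them (in either direction) restricting to the identity on the end terms. -/
def RepSeqStep {n : ℕ} {A B : M} (𝒳 : Set (NSeq M)) (S T : RepSeq M n A B) : Prop :=
  S.Good 𝒳 ∧ T.Good 𝒳 ∧ (RepSeqConnects S T ∨ RepSeqConnects T S)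

/-- The complex `0 → H_{Z⁰} → H_{Z¹} → ⋯ → H_{Z^{n+1}} → 0` of representable functors
associated with a complex `Z` in `M`. -/
def repSeqOf (n : ℕ) (Z : NSeq M) {A B : M} (h0 : Z.X 0 = A) (htop : Z.X (n + 1) = B)
    (hcx : Z.IsComplex n) : RepSeq M n A B where
  F i := preadditiveYoneda.obj (Z.X i)
  τ i := preadditiveYoneda.map (Z.d i)
  hF0 := by show preadditiveYoneda.obj (Z.X 0) = _; rw [h0]
  hFtop := by show preadditiveYoneda.obj (Z.X (n + 1)) = _; rw [htop]
  isComplex i hi := by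
    rw [← Functor.map_comp, hcx i hi]
    exact Functor.map_zero _ _ _

end NExactCat

namespace NExactCat

section Homotopy

variable {M : Type u} [SmallCategory M]

theorem IsNSeqHom.comp {n : ℕ} {S T U : NSeq M} {φ : ∀ i, S.X i ⟶ T.X i}
    {ψ : ∀ i, T.X i ⟶ U.X i} (hφ : IsNSeqHom n S T φ) (hψ : IsNSeqHom n T U ψ) :
    IsNSeqHom n S U (fun i => φ i ≫ ψ i) := fun i hi => by
  rw [reassoc_of% (hφ i hi), hψ i hi, Category.assoc]

variable [Preadditive M]

theorem exists_greedy_seq {α : ℕ → Type*} [∀ i, Inhabited (α i)] (a₀ : α 0)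
    (R : ∀ i, α i → α (i + 1) → Prop) :
    ∃ a : ∀ i, α i, a 0 = a₀ ∧ ∀ i, (∃ b, R i (a i) b) → R i (a i) (a (i + 1)) := by
  classical
  refine ⟨fun i => Nat.rec a₀ (fun i x => if h : ∃ b, R i x b then h.choose else default) i,
    rfl, fun i h => ?_⟩
  have := h.choose_spec
  simpa only [dif_pos h] using this

theorem LeftNExact.exists_lift {n : ℕ} {S : NSeq M} (hS : LeftNExact n S) {i : ℕ} (hi : i < n)
    {W : M} (x : W ⟶ S.X (i + 1)) (hx : x ≫ S.d (i + 1) = 0) : ∃ y, y ≫ S.d i = x :=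
  (hS.2 W i hi x).1 hx

theorem LeftNExact.eq_zero {n : ℕ} {S : NSeq M} (hS : LeftNExact n S)
    {W : M} (x : W ⟶ S.X 0) (hx : x ≫ S.d 0 = 0) : x = 0 :=
  hS.1 W (by simpa using hx)

theorem RightNExact.exists_desc {n : ℕ} {S : NSeq M} (hS : RightNExact n S) {i : ℕ} (hi : i < n)
    {W : M} (x : S.X (i + 1) ⟶ W) (hx : S.d i ≫ x = 0) : ∃ y, S.d (i + 1) ≫ y = x :=
  (hS.2 W i hi x).1 hx

theorem RightNExact.eq_zero {n : ℕ} {S : NSeq M} (hS : RightNExact n S)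
    {W : M} (x : S.X (n + 1) ⟶ W) (hx : S.d n ≫ x = 0) : x = 0 :=
  hS.1 W (by simpa using hx)

theorem LeftNExact.of_exists_lift {n : ℕ} {S : NSeq M} (hc : S.IsComplex n)
    (h0 : ∀ (W : M) (x : W ⟶ S.X 0), x ≫ S.d 0 = 0 → x = 0)
    (h : ∀ i, i < n → ∀ (W : M) (x : W ⟶ S.X (i + 1)), x ≫ S.d (i + 1) = 0 →
      ∃ y, y ≫ S.d i = x) : LeftNExact n S := by
  refine ⟨fun W x y hxy => ?_, fun W i hi x => ⟨h i hi W x, ?_⟩⟩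
  · refine sub_eq_zero.1 (h0 W _ ?_)
    simpa [sub_eq_zero] using hxy
  · rintro ⟨y, rfl⟩
    simp [hc i hi]

theorem RightNExact.of_exists_desc {n : ℕ} {S : NSeq M} (hc : S.IsComplex n)
    (h0 : ∀ (W : M) (x : S.X (n + 1) ⟶ W), S.d n ≫ x = 0 → x = 0)
    (h : ∀ i, i < n → ∀ (W : M) (x : S.X (i + 1) ⟶ W), S.d i ≫ x = 0 →
      ∃ y, S.d (i + 1) ≫ y = x) : RightNExact n S := by
  refine ⟨fun W x y hxy => ?_, fun W i hi x => ⟨h i hi W x, ?_⟩⟩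
  · refine sub_eq_zero.1 (h0 W _ ?_)
    simpa [sub_eq_zero] using hxy
  · rintro ⟨y, rfl⟩
    simp [reassoc_of% (hc i hi)]

/-- `h` is a null-homotopy of the family `χ : S ⟶ T` in degrees `0, …, n+1`. -/
structure IsNullHomotopy (n : ℕ) (S T : NSeq M) (χ : ∀ i, S.X i ⟶ T.X i)
    (h : ∀ i, S.X (i + 1) ⟶ T.X i) : Prop where
  bot : χ 0 = S.d 0 ≫ h 0
  mid : ∀ i, i < n → χ (i + 1) = S.d (i + 1) ≫ h (i + 1) + h i ≫ T.d i
  top : χ (n + 1) = h n ≫ T.d n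

/-- A commutative square in the top degrees extends to a morphism into a left `n`-exact
sequence. -/
theorem exists_hom_of_leftNExact {n : ℕ} {S T : NSeq M} (hS : S.IsComplex n)
    (hT : LeftNExact n T) (a : S.X n ⟶ T.X n) (b : S.X (n + 1) ⟶ T.X (n + 1))
    (hab : S.d n ≫ b = a ≫ T.d n) :
    ∃ φ : ∀ i, S.X i ⟶ T.X i, IsNSeqHom n S T φ ∧ φ n = a ∧ φ (n + 1) = b := by
  suffices H : ∀ j, j ≤ n → ∃ φ : ∀ i, S.X i ⟶ T.X i,
      (∀ i, j ≤ i → i ≤ n → S.d i ≫ φ (i + 1) = φ i ≫ T.d i) ∧ φ n = a ∧ φ (n + 1) = b by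
    obtain ⟨φ, h, h'⟩ := H 0 (Nat.zero_le _)
    exact ⟨φ, fun i hi => h i (Nat.zero_le _) hi, h'⟩
  intro j hj
  induction hj using Nat.decreasingInduction with
  | self =>
    refine ⟨Function.update (Function.update (fun _ => 0) n a) (n + 1) b, fun i h1 h2 => ?_, ?_⟩
    · obtain rfl : n = i := le_antisymm h1 h2
      simpa using hab
    · simp
  | of_succ j hj ih =>
    obtain ⟨φ, h, ha, hb⟩ := ih
    obtain ⟨y, hy⟩ := hT.exists_lift hj (S.d j ≫ φ (j + 1)) (by
      rw [Category.assoc, ← h (j + 1) le_rfl hj, reassoc_of% (hS j hj), zero_comp])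
    refine ⟨Function.update φ j y, fun i h1 h2 => ?_, ?_, ?_⟩
    · rcases h1.eq_or_lt with rfl | h1
      · simp [hy]
      · rw [Function.update_of_ne (by omega), Function.update_of_ne (by omega), h i h1 h2]
    · rw [Function.update_of_ne (by omega), ha]
    · rw [Function.update_of_ne (by omega), hb]

/-- A commutative square in the lowest degrees extends to a morphism out of a right `n`-exact
sequence. -/
theorem exists_hom_of_rightNExact {n : ℕ} {S T : NSeq M} (hT : T.IsComplex n)
    (hS : RightNExact n S) (a : S.X 0 ⟶ T.X 0) (b : S.X 1 ⟶ T.X 1)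
    (hab : S.d 0 ≫ b = a ≫ T.d 0) :
    ∃ φ : ∀ i, S.X i ⟶ T.X i, IsNSeqHom n S T φ ∧ φ 0 = a ∧ φ 1 = b := by
  suffices H : ∀ j, j ≤ n → ∃ φ : ∀ i, S.X i ⟶ T.X i,
      (∀ i, i ≤ j → S.d i ≫ φ (i + 1) = φ i ≫ T.d i) ∧ φ 0 = a ∧ φ 1 = b from H n le_rfl
  intro j hj
  induction j with
  | zero =>
    refine ⟨Function.update (Function.update (fun _ => 0) 0 a) 1 b, fun i h1 => ?_, ?_⟩
    · obtain rfl : i = 0 := by omega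
      simpa using hab
    · simp
  | succ j ih =>
    obtain ⟨φ, h, ha, hb⟩ := ih (by omega)
    obtain ⟨y, hy⟩ := hS.exists_desc (i := j) (by omega) (φ (j + 1) ≫ T.d (j + 1)) (by
      rw [reassoc_of% (h j le_rfl), hT j hj, comp_zero])
    refine ⟨Function.update φ (j + 2) y, fun i h1 => ?_, ?_, ?_⟩
    · rcases h1.eq_or_lt with rfl | h1
      · simp [hy]
      · rw [Function.update_of_ne (by omega), Function.update_of_ne (by omega), h i (by omega)]
    · rw [Function.update_of_ne (by omega), ha]
    · rw [Function.update_of_ne (by omega), hb]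

theorem exists_nullHomotopy_of_leftNExact {n : ℕ} (hn : 1 ≤ n) {S T : NSeq M}
    (hS : S.IsComplex n) (hT : LeftNExact n T) {χ : ∀ i, S.X i ⟶ T.X i}
    (hχ : IsNSeqHom n S T χ) (s : S.X (n + 1) ⟶ T.X n) (hs : χ (n + 1) = s ≫ T.d n) :
    ∃ h, IsNullHomotopy n S T χ h ∧ h n = s := by
  suffices H : ∀ j, j ≤ n → ∃ h : ∀ i, S.X (i + 1) ⟶ T.X i,
      (∀ i, j ≤ i → i < n → χ (i + 1) = S.d (i + 1) ≫ h (i + 1) + h i ≫ T.d i) ∧ h n = s by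
    obtain ⟨h, hm, hn'⟩ := H 0 (Nat.zero_le _)
    refine ⟨h, ⟨?_, fun i hi => hm i (Nat.zero_le _) hi, by rw [hn', hs]⟩, hn'⟩
    refine sub_eq_zero.1 (hT.eq_zero _ ?_)
    have h0 := hm 0 le_rfl hn
    rw [Preadditive.sub_comp, ← hχ 0 (Nat.zero_le _), h0]
    simp [reassoc_of% (hS 0 hn)]
  intro j hj
  induction hj using Nat.decreasingInduction with
  | self => exact ⟨Function.update (fun _ => 0) n s, fun i h1 h2 => by omega, by simp⟩
  | of_succ j hj ih =>
    obtain ⟨h, hm, hn'⟩ := ih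
    obtain ⟨y, hy⟩ := hT.exists_lift hj (χ (j + 1) - S.d (j + 1) ≫ h (j + 1)) (by
      rw [Preadditive.sub_comp, ← hχ (j + 1) hj, Category.assoc, ← Preadditive.comp_sub]
      rcases Nat.lt_or_ge (j + 1) n with h1 | h1
      · rw [hm (j + 1) le_rfl h1, add_sub_cancel_right, reassoc_of% (hS (j + 1) h1), zero_comp]
      · obtain rfl : n = j + 1 := by omega
        rw [hs, hn', sub_self, comp_zero])
    refine ⟨Function.update h j y, fun i h1 h2 => ?_, ?_⟩
    · rcases h1.eq_or_lt with rfl | h1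
      · simp [hy]
      · rw [Function.update_of_ne (by omega), Function.update_of_ne (by omega), hm i h1 h2]
    · rw [Function.update_of_ne (by omega), hn']

theorem exists_nullHomotopy_of_rightNExact {n : ℕ} (hn : 1 ≤ n) {S T : NSeq M}
    (hT : T.IsComplex n) (hS : RightNExact n S) {χ : ∀ i, S.X i ⟶ T.X i}
    (hχ : IsNSeqHom n S T χ) (s : S.X 1 ⟶ T.X 0) (hs : χ 0 = S.d 0 ≫ s) :
    ∃ h, IsNullHomotopy n S T χ h ∧ h 0 = s := by
  suffices H : ∀ j, j ≤ n → ∃ h : ∀ i, S.X (i + 1) ⟶ T.X i,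
      (∀ i, i < j → χ (i + 1) = S.d (i + 1) ≫ h (i + 1) + h i ≫ T.d i) ∧ h 0 = s by
    obtain ⟨h, hm, h0⟩ := H n le_rfl
    refine ⟨h, ⟨by rw [h0, hs], hm, ?_⟩, h0⟩
    refine sub_eq_zero.1 (hS.eq_zero _ ?_)
    obtain ⟨m, rfl⟩ : ∃ m, n = m + 1 := ⟨n - 1, by omega⟩
    have h0 := hm m (by omega)
    rw [Preadditive.comp_sub, hχ (m + 1) le_rfl, h0]
    simp [hT m le_rfl]
  intro j hj
  induction j with
  | zero => exact ⟨Function.update (fun _ => 0) 0 s, fun i h1 => by omega, by simp⟩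
  | succ j ih =>
    obtain ⟨h, hm, h0⟩ := ih (by omega)
    obtain ⟨y, hy⟩ := hS.exists_desc (i := j) hj (χ (j + 1) - h j ≫ T.d j) (by
      rw [Preadditive.comp_sub, hχ j (by omega), ← Category.assoc, ← Preadditive.sub_comp]
      cases j with
      | zero => rw [hs, h0, sub_self, zero_comp]
      | succ k =>
        rw [hm k (by omega), add_sub_cancel_left, Category.assoc, hT k (by omega), comp_zero])
    refine ⟨Function.update h (j + 1) y, fun i h1 => ?_, ?_⟩
    · rcases (Nat.lt_succ_iff.1 h1).eq_or_lt with rfl | h1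
      · simp [hy]
      · rw [Function.update_of_ne (by omega), Function.update_of_ne (by omega), hm i h1]
    · rw [Function.update_of_ne (by omega), h0]

theorem IsNSeqHom.id_sub {n : ℕ} {S : NSeq M} {φ : ∀ i, S.X i ⟶ S.X i}
    (hφ : IsNSeqHom n S S φ) : IsNSeqHom n S S (fun i => 𝟙 _ - φ i) := fun i hi => by
  simp [hφ i hi]

/-- A complex which is a retract up to homotopy of a left `n`-exact sequence is left
`n`-exact. -/
theorem LeftNExact.of_homotopy_retract {n : ℕ} {S U : NSeq M} (hU : LeftNExact n U)
    (hS : S.IsComplex n)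
    {φ : ∀ i, S.X i ⟶ U.X i} {ψ : ∀ i, U.X i ⟶ S.X i} (hφ : IsNSeqHom n S U φ)
    (hψ : IsNSeqHom n U S ψ) {h : ∀ i, S.X (i + 1) ⟶ S.X i}
    (hh : IsNullHomotopy n S S (fun i => 𝟙 _ - φ i ≫ ψ i) h) : LeftNExact n S := by
  refine LeftNExact.of_exists_lift hS (fun W x hx => ?_) (fun i hi W x hx => ?_)
  · have h1 : x ≫ φ 0 = 0 := hU.eq_zero _ (by
      rw [Category.assoc, ← hφ 0 (Nat.zero_le _), reassoc_of% hx, zero_comp])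
    have h2 := x ≫= hh.bot
    simpa [reassoc_of% h1, reassoc_of% hx] using h2
  · obtain ⟨y, hy⟩ := hU.exists_lift hi (x ≫ φ (i + 1)) (by
      rw [Category.assoc, ← hφ (i + 1) hi, reassoc_of% hx, zero_comp])
    refine ⟨y ≫ ψ i + x ≫ h i, ?_⟩
    have h2 := x ≫= hh.mid i hi
    simp only [Preadditive.comp_sub, Preadditive.comp_add, Category.comp_id, reassoc_of% hx,
      zero_comp, zero_add] at h2
    rw [Preadditive.add_comp, Category.assoc, Category.assoc, ← h2, ← hψ i hi.le,
      reassoc_of% hy]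
    abel

/-- A complex which is a retract up to homotopy of a right `n`-exact sequence is right
`n`-exact. -/
theorem RightNExact.of_homotopy_retract {n : ℕ} {S U : NSeq M} (hU : RightNExact n U)
    (hS : S.IsComplex n)
    {φ : ∀ i, S.X i ⟶ U.X i} {ψ : ∀ i, U.X i ⟶ S.X i} (hφ : IsNSeqHom n S U φ)
    (hψ : IsNSeqHom n U S ψ) {h : ∀ i, S.X (i + 1) ⟶ S.X i}
    (hh : IsNullHomotopy n S S (fun i => 𝟙 _ - φ i ≫ ψ i) h) : RightNExact n S := by
  refine RightNExact.of_exists_desc hS (fun W x hx => ?_) (fun i hi W x hx => ?_)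
  · have h1 : ψ (n + 1) ≫ x = 0 := hU.eq_zero _ (by
      rw [reassoc_of% (hψ n le_rfl), hx, comp_zero])
    have h2 := hh.top =≫ x
    simpa [h1, hx] using h2
  · obtain ⟨y, hy⟩ := hU.exists_desc hi (ψ (i + 1) ≫ x) (by
      rw [reassoc_of% (hψ i hi.le), hx, comp_zero])
    refine ⟨φ (i + 2) ≫ y + h (i + 1) ≫ x, ?_⟩
    have h2 := hh.mid i hi =≫ x
    simp only [Preadditive.sub_comp, Preadditive.add_comp, Category.id_comp, Category.assoc, hx,
      comp_zero, add_zero] at h2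
    rw [Preadditive.comp_add, ← h2, reassoc_of% (hφ (i + 1) hi), hy]
    abel

end Homotopy

section Pushout

variable {M : Type u} [SmallCategory M] [Preadditive M]

/-- The truncation of `T` in degrees `0, …, n`, prolonged by a morphism `p : T.X n ⟶ B`. -/
theorem exists_truncation (n : ℕ) (T : NSeq M) {B : M} (p : T.X n ⟶ B) :
    ∃ (S : NSeq M) (e : ∀ i, i ≤ n → (S.X i ≅ T.X i)) (t : S.X (n + 1) ≅ B),
      (∀ i (h : i + 1 ≤ n), S.d i ≫ (e (i + 1) h).hom = (e i (by omega)).hom ≫ T.d i) ∧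
      S.d n ≫ t.hom = (e n le_rfl).hom ≫ p := by
  let X : ℕ → M := fun i => if i ≤ n then T.X i else B
  have hX : ∀ i, i ≤ n → X i = T.X i := fun i hi => if_pos hi
  have hB : X (n + 1) = B := if_neg (by omega)
  refine ⟨⟨X, fun i => if h : i + 1 ≤ n then
      eqToHom (hX i (by omega)) ≫ T.d i ≫ eqToHom (hX (i + 1) h).symm
    else if h' : i = n then
      eqToHom (h' ▸ hX n le_rfl) ≫ p ≫ eqToHom (by rw [h', hB])
    else 0⟩, fun i hi => eqToIso (hX i hi), eqToIso hB, fun i h => ?_, ?_⟩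
  · simp [h]
  · simp

variable [HasFiniteBiproducts M]

theorem coneX_succ (n : ℕ) (S T : NSeq M) {i : ℕ} (hi : i + 1 ≤ n) :
    coneX n S T (i + 1) = (S.X (i + 1) ⊞ T.X i) :=
  coneX_mid n S T (Nat.succ_ne_zero i) hi

theorem coneX_last (n : ℕ) (S T : NSeq M) : coneX n S T (n + 1) = T.X n :=
  coneX_top n S T (Nat.lt_succ_self n)

theorem coneD_zero (n : ℕ) (hn : 1 ≤ n) (S T : NSeq M) (f : ∀ i, S.X i ⟶ T.X i) :
    coneD n S T f 0 = eqToHom (coneX_zero n S T) ≫ biprod.lift (-(S.d 0)) (f 0) ≫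
      eqToHom (coneX_succ n S T hn).symm := by
  simp [coneD, hn]

theorem coneD_succ (n : ℕ) (S T : NSeq M) (f : ∀ i, S.X i ⟶ T.X i) (i : ℕ) (hi : i + 2 ≤ n) :
    coneD n S T f (i + 1) = eqToHom (coneX_succ n S T (Nat.le_of_succ_le hi)) ≫
      biprod.lift (biprod.fst ≫ (-(S.d (i + 1))))
        (biprod.fst ≫ f (i + 1) + biprod.snd ≫ T.d i) ≫
      eqToHom (coneX_succ n S T hi).symm := by
  simp [coneD, hi]

theorem coneD_top (m : ℕ) (S T : NSeq M) (f : ∀ i, S.X i ⟶ T.X i) :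
    coneD (m + 1) S T f (m + 1) =
      eqToHom (coneX_succ (m + 1) S T le_rfl) ≫
      biprod.desc (f (m + 1)) (T.d m) ≫
      eqToHom (coneX_last (m + 1) S T).symm := by
  simp [coneD]

/-- Morphisms to `W` out of the target of a differential of the mapping cone in degree
`i + 1 ≤ n`, in terms of components. -/
theorem exists_of_coneD_comp {n : ℕ} {S T : NSeq M} {f : ∀ i, S.X i ⟶ T.X i} {i : ℕ}
    (hi : i + 1 ≤ n) {W : M} {z : coneX n S T (i + 2) ⟶ W} {y : S.X (i + 1) ⟶ W}
    {x : T.X i ⟶ W} (h : coneD n S T f (i + 1) ≫ z =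
      eqToHom (coneX_succ n S T hi) ≫ biprod.desc y x) :
    ∃ (b : T.X (i + 1) ⟶ W) (a : S.X (i + 2) ⟶ W), T.d i ≫ b = x ∧
      f (i + 1) ≫ b = y + S.d (i + 1) ≫ a ∧ (i + 1 = n → a = 0) := by
  rcases hi.eq_or_lt with rfl | hi
  · rw [coneD_top, Category.assoc, cancel_epi, Category.assoc] at h
    refine ⟨eqToHom (coneX_last (i + 1) S T).symm ≫ z, 0, ?_, ?_, by simp⟩
    · simpa using biprod.inr ≫= h
    · simpa using biprod.inl ≫= h
  · rw [coneD_succ n S T f i hi, Category.assoc, cancel_epi, Category.assoc] at h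
    have e := (coneX_succ n S T hi).symm
    obtain ⟨w, hw⟩ : ∃ w, w = eqToHom e ≫ z := ⟨_, rfl⟩
    rw [← hw] at h
    refine ⟨biprod.inr ≫ w, biprod.inl ≫ w, ?_, ?_, by omega⟩
    · have h1 := biprod.inr ≫= h
      simpa [biprod.lift_eq] using h1
    · have h1 := biprod.inl ≫= h
      simp only [biprod.lift_eq, Preadditive.add_comp, Preadditive.comp_add, Category.assoc,
        biprod.inl_fst_assoc, biprod.inl_snd_assoc, zero_comp, add_zero, biprod.inl_desc,
        Preadditive.neg_comp] at h1
      rw [← h1]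
      abel

variable {n : ℕ} {S T : NSeq M} {f : ∀ i, S.X i ⟶ T.X i}

theorem IsNPushout.exists_cone_desc (hp : IsNPushout n S T f) {i : ℕ} (hi : i < n) {W : M}
    (x : coneX n S T (i + 1) ⟶ W) (hx : coneD n S T f i ≫ x = 0) :
    ∃ z, coneD n S T f (i + 1) ≫ z = x :=
  RightNExact.exists_desc hp hi x hx

theorem IsNPushout.cone_eq_zero (hp : IsNPushout n S T f) {W : M}
    (x : coneX n S T (n + 1) ⟶ W) (hx : coneD n S T f n ≫ x = 0) : x = 0 :=
  RightNExact.eq_zero hp x hx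

theorem IsNPushout.exists_desc_zero (hn : 1 ≤ n) (hp : IsNPushout n S T f) {W : M}
    (y : S.X 1 ⟶ W) (x : T.X 0 ⟶ W) (hxy : S.d 0 ≫ y = f 0 ≫ x) :
    ∃ (b : T.X 1 ⟶ W) (a : S.X 2 ⟶ W), T.d 0 ≫ b = x ∧
      f 1 ≫ b = y + S.d 1 ≫ a ∧ (1 = n → a = 0) := by
  obtain ⟨z, hz⟩ := hp.exists_cone_desc (i := 0) hn
    (eqToHom (coneX_succ n S T hn) ≫ biprod.desc y x) (by
      rw [coneD_zero n hn]
      simp [biprod.lift_eq, hxy])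
  exact exists_of_coneD_comp hn hz

theorem IsNPushout.exists_desc_succ (hp : IsNPushout n S T f) {i : ℕ} (hi : i + 2 ≤ n) {W : M}
    (y : S.X (i + 2) ⟶ W) (x : T.X (i + 1) ⟶ W) (hxy : S.d (i + 1) ≫ y = f (i + 1) ≫ x)
    (hx : T.d i ≫ x = 0) :
    ∃ (b : T.X (i + 2) ⟶ W) (a : S.X (i + 3) ⟶ W), T.d (i + 1) ≫ b = x ∧
      f (i + 2) ≫ b = y + S.d (i + 2) ≫ a ∧ (i + 2 = n → a = 0) := by
  obtain ⟨z, hz⟩ := hp.exists_cone_desc (i := i + 1) hi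
    (eqToHom (coneX_succ n S T hi) ≫ biprod.desc y x) (by
      rw [coneD_succ n S T f i hi]
      simp [biprod.lift_eq, hxy, hx])
  exact exists_of_coneD_comp hi hz

theorem IsNPushout.eq_zero {m : ℕ} (hp : IsNPushout (m + 1) S T f) {W : M}
    (x : T.X (m + 1) ⟶ W) (h1 : f (m + 1) ≫ x = 0) (h2 : T.d m ≫ x = 0) : x = 0 := by
  have h := hp.cone_eq_zero
    (eqToHom (coneX_last (m + 1) S T) ≫ x) (by
      rw [coneD_top, Category.assoc]
      have h3 : biprod.desc (f (m + 1)) (T.d m) ≫ x = 0 := by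
        ext <;> simp [h1, h2]
      simp [h3])
  simpa using (eqToHom (coneX_last (m + 1) S T).symm) ≫= h

theorem IsNPushout.d_comp_d (hp : IsNPushout n S T f) {i : ℕ} (hi : i + 2 ≤ n) :
    T.d i ≫ T.d (i + 1) = 0 := by
  have h : coneD n S T f (i + 1) ≫ coneD n S T f (i + 2) = 0 := by
    have := (hp.2 _ (i + 1) hi (coneD n S T f (i + 2))).2 ⟨𝟙 _, Category.comp_id _⟩
    exact this
  rw [coneD_succ n S T f i hi] at h
  rcases hi.eq_or_lt with rfl | hi
  · rw [coneD_top (i + 1)] at h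
    have h1 := (biprod.inr ≫ eqToHom (coneX_succ (i + 1 + 1) S T (i := i) (by omega)).symm) ≫=
      h =≫ eqToHom (coneX_last (i + 1 + 1) S T)
    simpa [biprod.lift_eq] using h1
  · rw [coneD_succ n S T f (i + 1) hi] at h
    have h1 := (biprod.inr ≫ eqToHom (coneX_succ n S T (i := i) (by omega)).symm) ≫=
      h =≫ (eqToHom (coneX_succ n S T hi) ≫ biprod.snd)
    simpa [biprod.lift_eq] using h1

theorem IsNPushout.exists_prolongation {m : ℕ} (hp : IsNPushout (m + 1) S T f)
    (hS : S.IsComplex (m + 1)) :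
    ∃ p : T.X (m + 1) ⟶ S.X (m + 2), f (m + 1) ≫ p = S.d (m + 1) ∧ T.d m ≫ p = 0 := by
  have h : S.d m ≫ S.d (m + 1) = f m ≫ 0 := by rw [hS m le_rfl, comp_zero]
  cases m with
  | zero =>
    obtain ⟨p, a, h1, h2, h3⟩ := hp.exists_desc_zero le_rfl _ _ h
    exact ⟨p, by rw [h2, h3 rfl, comp_zero, add_zero], h1⟩
  | succ m =>
    obtain ⟨p, a, h1, h2, h3⟩ := hp.exists_desc_succ le_rfl _ _ h comp_zero
    exact ⟨p, by rw [h2, h3 rfl, comp_zero, add_zero], h1⟩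

/-- A morphism from `S` to a complex `Y` extends, up to homotopy, along an `n`-pushout of `S`
with prescribed component in degree `0`. -/
theorem IsNPushout.exists_hom {m : ℕ} (hp : IsNPushout (m + 1) S T f) {Y : NSeq M}
    (hY : Y.IsComplex (m + 1)) {ρ : ∀ i, S.X i ⟶ Y.X i} (hρ : IsNSeqHom (m + 1) S Y ρ)
    (a : T.X 0 ⟶ Y.X 0) (ha : f 0 ≫ a = ρ 0) :
    ∃ ψ : ∀ i, T.X i ⟶ Y.X i, ψ 0 = a ∧ (∀ i, i ≤ m → T.d i ≫ ψ (i + 1) = ψ i ≫ Y.d i) ∧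
      f (m + 1) ≫ ψ (m + 1) ≫ Y.d (m + 1) = ρ (m + 1) ≫ Y.d (m + 1) := by
  let R : ∀ i, (T.X i ⟶ Y.X i) × (S.X (i + 1) ⟶ Y.X i) →
      (T.X (i + 1) ⟶ Y.X (i + 1)) × (S.X (i + 2) ⟶ Y.X (i + 1)) → Prop := fun i u v =>
    T.d i ≫ v.1 = u.1 ≫ Y.d i ∧
      f (i + 1) ≫ v.1 = (ρ (i + 1) + u.2 ≫ Y.d i) + S.d (i + 1) ≫ v.2 ∧ (i + 1 = m + 1 → v.2 = 0)
  have : ∀ i, Inhabited ((T.X i ⟶ Y.X i) × (S.X (i + 1) ⟶ Y.X i)) := fun i => ⟨0, 0⟩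
  obtain ⟨u, hu0, hu⟩ := exists_greedy_seq
    (α := fun i => (T.X i ⟶ Y.X i) × (S.X (i + 1) ⟶ Y.X i)) (a, 0) R
  have H : ∀ i, i ≤ m → R i (u i) (u (i + 1)) := by
    intro i
    induction i with
    | zero =>
      intro hi
      apply hu
      obtain ⟨b, c, h⟩ := hp.exists_desc_zero (by omega) (ρ 1 + (u 0).2 ≫ Y.d 0)
        ((u 0).1 ≫ Y.d 0) (by
          simp [hu0, reassoc_of% ha, hρ 0 (Nat.zero_le _)])
      exact ⟨(b, c), h⟩
    | succ i ih =>
      intro hi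
      apply hu
      obtain ⟨h1, h2, -⟩ := ih (by omega)
      obtain ⟨b, c, h⟩ := hp.exists_desc_succ (by omega) (ρ (i + 2) + (u (i + 1)).2 ≫ Y.d (i + 1))
        ((u (i + 1)).1 ≫ Y.d (i + 1)) (by
          rw [reassoc_of% h2]
          simp [hρ (i + 1) (by omega), hY i (by omega)]) (by
          rw [reassoc_of% h1, hY i (by omega), comp_zero])
      exact ⟨(b, c), h⟩
  refine ⟨fun i => (u i).1, by simp [hu0], fun i hi => (H i hi).1, ?_⟩
  obtain ⟨-, h2, h3⟩ := H m le_rfl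
  rw [reassoc_of% h2, h3 rfl]
  simp [hY m le_rfl]

end Pushout

section Admissible

variable {M : Type u} [SmallCategory M]

theorem AdmMono.exists_iso {𝒳 : Set (NSeq M)} {A B : M} {g : A ⟶ B} (h : AdmMono 𝒳 g) :
    ∃ Z ∈ 𝒳, ∃ (a : Z.X 0 ≅ A) (b : Z.X 1 ≅ B), Z.d 0 ≫ b.hom = a.hom ≫ g := by
  obtain ⟨Z, hZ, h0, h1, h⟩ := h
  exact ⟨Z, hZ, eqToIso h0, eqToIso h1, by simp [h]⟩

theorem AdmEpi.exists_iso {n : ℕ} {𝒳 : Set (NSeq M)} {A B : M} {g : A ⟶ B}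
    (h : AdmEpi n 𝒳 g) :
    ∃ Z ∈ 𝒳, ∃ (a : Z.X n ≅ A) (b : Z.X (n + 1) ≅ B), Z.d n ≫ b.hom = a.hom ≫ g := by
  obtain ⟨Z, hZ, h0, h1, h⟩ := h
  exact ⟨Z, hZ, eqToIso h0, eqToIso h1, by simp [h]⟩

variable [Preadditive M]

/-- If `Y` is exact in degrees `≤ i`, then a morphism `Z.X (k+1) ⟶ Y.X i` inducing a morphism
from the cokernel of `Z.d k` to `Y.X (i+1)` can be replaced by one factoring through
`Z.d (k+1)`. -/
theorem exists_comp_d_eq {n : ℕ} {Y Z : NSeq M} (hY : Y.IsComplex n) (hZc : Z.IsComplex n)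
    (hZ : RightNExact n Z) (h0 : ∀ (W : M) (x : W ⟶ Y.X 0), x ≫ Y.d 0 = 0 → x = 0) (i : ℕ)
    (hi : ∀ j, j < i → ∀ (W : M) (x : W ⟶ Y.X (j + 1)), x ≫ Y.d (j + 1) = 0 →
      ∃ y, y ≫ Y.d j = x) (k : ℕ) (hik : i ≤ k) (hk : k < n) (y : Z.X (k + 1) ⟶ Y.X i)
    (hy : Z.d k ≫ y ≫ Y.d i = 0) :
    ∃ t : Z.X (k + 2) ⟶ Y.X i, y ≫ Y.d i = Z.d (k + 1) ≫ t ≫ Y.d i := by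
  induction i generalizing k with
  | zero =>
    obtain ⟨t, ht⟩ := hZ.exists_desc hk y (h0 _ _ (by simpa using hy))
    exact ⟨t, by rw [reassoc_of% ht]⟩
  | succ i ih =>
    obtain ⟨l, rfl⟩ : ∃ l, k = l + 1 := ⟨k - 1, by omega⟩
    obtain ⟨z, hz⟩ := hi i (Nat.lt_succ_self i) _ (Z.d (l + 1) ≫ y) (by simpa using hy)
    obtain ⟨s, hs⟩ := ih (fun j hj => hi j (by omega)) l (by omega) (by omega) z (by
      rw [hz, reassoc_of% (hZc l (by omega)), zero_comp])
    obtain ⟨t, ht⟩ := hZ.exists_desc hk (y - s ≫ Y.d i) (by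
      rw [Preadditive.comp_sub, ← hz, hs, sub_self])
    refine ⟨t, ?_⟩
    rw [reassoc_of% ht, Preadditive.sub_comp, Category.assoc, hY i (by omega), comp_zero,
      sub_zero]

variable [HasFiniteBiproducts M] {n : ℕ} {𝒳 : Set (NSeq M)}

theorem IsNExactStructure.admEpi_comp_eq_zero
    (h𝒳 : IsNExactStructure n 𝒳) {V X W : M} {g : V ⟶ X} (hg : AdmEpi n 𝒳 g) (x : X ⟶ W)
    (hx : g ≫ x = 0) : x = 0 := by
  obtain ⟨Z, hZ, a, b, h⟩ := hg.exists_iso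
  have := (h𝒳.nExact Z hZ).2.2.eq_zero (b.hom ≫ x) (by
    rw [reassoc_of% h, hx, comp_zero])
  simpa using b.inv ≫= this

theorem IsNExactStructure.leftNExact_of_weaklyEffaceable
    (h𝒳 : IsNExactStructure n 𝒳) {Y : NSeq M} (hY : Y.IsComplex n)
    (h0 : ∀ (X : M) (x : X ⟶ Y.X 0), x ≫ Y.d 0 = 0 →
      ∃ (V : M) (g : V ⟶ X), AdmEpi n 𝒳 g ∧ g ≫ x = 0)
    (h1 : ∀ i, i < n → ∀ (X : M) (x : X ⟶ Y.X (i + 1)), x ≫ Y.d (i + 1) = 0 →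
      ∃ (V : M) (g : V ⟶ X), AdmEpi n 𝒳 g ∧ ∃ y : V ⟶ Y.X i, y ≫ Y.d i = g ≫ x) :
    LeftNExact n Y := by
  have h0' : ∀ (X : M) (x : X ⟶ Y.X 0), x ≫ Y.d 0 = 0 → x = 0 := fun X x hx => by
    obtain ⟨V, g, hg, hgx⟩ := h0 X x hx
    exact h𝒳.admEpi_comp_eq_zero hg x hgx
  refine LeftNExact.of_exists_lift hY h0' fun i => ?_
  induction i using Nat.strong_induction_on with
  | _ i ih =>
    intro hi X x hx
    obtain ⟨V, g, hg, y, hy⟩ := h1 i hi X x hx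
    obtain ⟨m, rfl⟩ : ∃ m, n = m + 1 := ⟨n - 1, by omega⟩
    obtain ⟨Z, hZ, a, b, h⟩ := hg.exists_iso
    obtain ⟨hZc, -, hZr⟩ := h𝒳.nExact Z hZ
    obtain ⟨t, ht⟩ := exists_comp_d_eq hY hZc hZr h0' i (fun j hj => ih j hj (by omega)) m
      (by omega) (by omega) (a.hom ≫ y) (by
        rw [Category.assoc, hy, ← reassoc_of% h, reassoc_of% (hZc m le_rfl), zero_comp])
    refine ⟨b.inv ≫ t, ?_⟩
    have h2 : b.hom ≫ x - t ≫ Y.d i = 0 := hZr.eq_zero _ (by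
      rw [Preadditive.comp_sub, reassoc_of% h, ← hy, ← ht, Category.assoc, sub_self])
    rw [Category.assoc, ← sub_eq_zero.1 h2, Iso.inv_hom_id_assoc]

/-- A right `n`-exact sequence whose first differential is an admissible monomorphism is
admissible. -/
theorem IsNExactStructure.mem_of_admMono
    (h𝒳 : IsNExactStructure n 𝒳) (hn : 1 ≤ n) {S : NSeq M} (hc : S.IsComplex n)
    (hS : RightNExact n S) (h0 : ∃ Z ∈ 𝒳, ∃ (a : Z.X 0 ≅ S.X 0) (b : Z.X 1 ≅ S.X 1),
      Z.d 0 ≫ b.hom = a.hom ≫ S.d 0) : S ∈ 𝒳 := by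
  obtain ⟨U, hU, a, b, h⟩ := h0
  obtain ⟨hUc, hUl, hUr⟩ := h𝒳.nExact U hU
  obtain ⟨φ, hφ, hφ0, -⟩ := exists_hom_of_rightNExact hUc hS a.inv b.inv (by
    rw [Iso.comp_inv_eq, Category.assoc, h, Iso.inv_hom_id_assoc])
  obtain ⟨ψ, hψ, hψ0, hψ1⟩ := exists_hom_of_rightNExact hc hUr a.hom b.hom h
  obtain ⟨s, hs, -⟩ := exists_nullHomotopy_of_rightNExact hn hc hS (hφ.comp hψ).id_sub 0
    (by simp [hφ0, hψ0])
  have hSl := hUl.of_homotopy_retract hc hφ hψ hs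
  refine h𝒳.weakIsoClosed U hU S ⟨hc, hSl, hS⟩
    (Or.inl ⟨ψ, hψ, Or.inl ⟨0, Nat.zero_le _, ?_, ?_⟩⟩)
  · rw [hψ0]; infer_instance
  · rw [hψ1]; infer_instance

/-- The pullback of an admissible epimorphism along an arbitrary morphism. -/
theorem IsNExactStructure.exists_admEpi_comp_eq
    (h𝒳 : IsNExactStructure n 𝒳) (hn : 1 ≤ n) {Z : NSeq M} (hZ : Z ∈ 𝒳) {A : M}
    (g : A ⟶ Z.X (n + 1)) :
    ∃ (V : M) (q : V ⟶ A) (v : V ⟶ Z.X n), AdmEpi n 𝒳 q ∧ q ≫ g = v ≫ Z.d n := by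
  obtain ⟨T, f, rfl, hf, hc, -, hT⟩ := h𝒳.pullback Z hZ A g
  obtain ⟨m, rfl⟩ : ∃ m, n = m + 1 := ⟨n - 1, by omega⟩
  refine ⟨T.X m, T.d m, f m, hT, ?_⟩
  rw [← hc m le_rfl, hf, eqToHom_refl, Category.id_comp]


/-- Pushing out an admissible sequence `Z` along the first component of a morphism `ρ : Z ⟶ Y` to
a complex with `ρ (n + 1)` invertible gives an admissible sequence with a morphism to `Y` which
is invertible in degrees `0` and `n + 1`. -/
theorem IsNExactStructure.exists_pushout_mem (h𝒳 : IsNExactStructure n 𝒳) (hn : 1 ≤ n)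
    {Z : NSeq M} (hZ : Z ∈ 𝒳) {Y : NSeq M} (hY : Y.IsComplex n) {ρ : ∀ i, Z.X i ⟶ Y.X i}
    (hρ : IsNSeqHom n Z Y ρ) (hρ' : IsIso (ρ (n + 1))) :
    ∃ S ∈ 𝒳, ∃ ψ : ∀ i, S.X i ⟶ Y.X i, IsNSeqHom n S Y ψ ∧ IsIso (ψ 0) ∧ IsIso (ψ (n + 1)) := by
  obtain ⟨m, rfl⟩ : ∃ m, n = m + 1 := ⟨n - 1, by omega⟩
  obtain ⟨hZc, -, hZr⟩ := h𝒳.nExact Z hZ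
  obtain ⟨T, f, h0, hf0, hf, hp, hT⟩ := h𝒳.pushout Z hZ (Y.X 0) (ρ 0)
  obtain ⟨p, hp1, hp2⟩ := hp.exists_prolongation hZc
  obtain ⟨ψ, hψ0, hψ, hψtop⟩ := hp.exists_hom hY hρ (eqToHom h0) (by simp [hf0])
  have hpψ : p ≫ ρ (m + 2) = ψ (m + 1) ≫ Y.d (m + 1) := by
    refine sub_eq_zero.1 (hp.eq_zero _ ?_ ?_)
    · rw [Preadditive.comp_sub, hψtop, reassoc_of% hp1, hρ (m + 1) le_rfl, sub_self]
    · rw [Preadditive.comp_sub, reassoc_of% hp2, reassoc_of% (hψ m le_rfl), hY m le_rfl,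
        zero_comp, comp_zero, sub_self]
  obtain ⟨S, e, t, he, ht⟩ := exists_truncation (m + 1) T p
  have he' : ∀ i (h : i + 1 ≤ m + 1),
      T.d i ≫ (e (i + 1) h).inv = (e i (by omega)).inv ≫ S.d i := fun i h => by
    rw [Iso.comp_inv_eq, Category.assoc, he, Iso.inv_hom_id_assoc]
  have ht' : p ≫ t.inv = (e (m + 1) le_rfl).inv ≫ S.d (m + 1) := by
    rw [Iso.comp_inv_eq, Category.assoc, ht, Iso.inv_hom_id_assoc]
  have hSc : S.IsComplex (m + 1) := by
    intro i hi
    rcases hi.eq_or_lt with h | h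
    · obtain rfl : i = m := by omega
      rw [← cancel_mono t.hom, Category.assoc, ht, reassoc_of% (he i hi), hp2]
      simp
    · rw [← cancel_mono (e (i + 2) h).hom, Category.assoc, he, reassoc_of% (he i hi),
        hp.d_comp_d h]
      simp
  have hSr : RightNExact (m + 1) S := by
    refine RightNExact.of_exists_desc hSc (fun W x hx => ?_) (fun i hi W x hx => ?_)
    · have h1 : t.inv ≫ x = 0 := hZr.eq_zero _ (by
        rw [← hp1, Category.assoc, reassoc_of% ht', hx, comp_zero, comp_zero])
      simpa using t.hom ≫= h1
    · have hx' : T.d i ≫ (e (i + 1) hi).inv ≫ x = 0 := by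
        rw [reassoc_of% (he' i hi), hx, comp_zero]
      obtain ⟨y, hy⟩ := hZr.exists_desc hi (f (i + 1) ≫ (e (i + 1) hi).inv ≫ x) (by
        rw [reassoc_of% (hf i hi), hx', comp_zero])
      rcases (show i + 1 ≤ m + 1 from hi).eq_or_lt with h | h
      · obtain rfl : i = m := by omega
        have h1 : (e (i + 1) hi).inv ≫ x - p ≫ y = 0 := hp.eq_zero _
          (by rw [Preadditive.comp_sub, reassoc_of% hp1, hy, sub_self])
          (by rw [Preadditive.comp_sub, hx', reassoc_of% hp2, zero_comp, sub_self])
        refine ⟨t.hom ≫ y, ?_⟩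
        rw [reassoc_of% ht, ← sub_eq_zero.1 h1, Iso.hom_inv_id_assoc]
      · obtain ⟨b, -, hb, -⟩ := hp.exists_desc_succ h y _ hy hx'
        refine ⟨(e (i + 2) h).hom ≫ b, ?_⟩
        rw [reassoc_of% (he (i + 1) h), hb, Iso.hom_inv_id_assoc]
  refine ⟨S, h𝒳.mem_of_admMono hn hSc hSr ?_, ?_⟩
  · obtain ⟨U, hU, a, b, h⟩ := hT.exists_iso
    refine ⟨U, hU, a ≪≫ (e 0 (by omega)).symm, b ≪≫ (e 1 (by omega)).symm, ?_⟩
    simp [reassoc_of% h, he' 0 (by omega)]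
  · refine ⟨Function.update (fun i => if h : i ≤ m + 1 then (e i h).hom ≫ ψ i else 0) (m + 2)
      (t.hom ≫ ρ (m + 2)), fun i hi => ?_, ?_, ?_⟩
    · rw [Function.update_of_ne (by omega : i ≠ m + 2), dif_pos hi]
      rcases hi.eq_or_lt with rfl | h
      · rw [Function.update_self, reassoc_of% ht, hpψ, Category.assoc]
      · rw [Function.update_of_ne (by omega), dif_pos (show i + 1 ≤ m + 1 from h),
          reassoc_of% (he i h), hψ i (by omega), Category.assoc]
    · rw [Function.update_of_ne (by omega), dif_pos (by omega), hψ0]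
      infer_instance
    · rw [Function.update_self]
      infer_instance

/-- A left `n`-exact complex with a morphism from an admissible sequence which is invertible in
degrees `0` and `n + 1` is admissible. -/
theorem IsNExactStructure.mem_of_isIso_ends (h𝒳 : IsNExactStructure n 𝒳) (hn : 1 ≤ n)
    {S Y : NSeq M} (hS : S ∈ 𝒳) (hY : Y.IsComplex n) (hYl : LeftNExact n Y)
    {ψ : ∀ i, S.X i ⟶ Y.X i} (hψ : IsNSeqHom n S Y ψ) (h0 : IsIso (ψ 0))
    (h1 : IsIso (ψ (n + 1))) : Y ∈ 𝒳 := by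
  obtain ⟨hSc, hSl, hSr⟩ := h𝒳.nExact S hS
  obtain ⟨l, hl⟩ : ∃ l : Y.X n ⟶ S.X n, l ≫ S.d n = Y.d n ≫ inv (ψ (n + 1)) := by
    obtain ⟨V, q, v, hq, hqv⟩ := h𝒳.exists_admEpi_comp_eq hn hS (Y.d n ≫ inv (ψ (n + 1)))
    obtain ⟨U, hU, a, b, hab⟩ := hq.exists_iso
    obtain ⟨hUc, -, hUr⟩ := h𝒳.nExact U hU
    obtain ⟨φ, hφ, -, hφ1⟩ := exists_hom_of_leftNExact hUc hSl (a.hom ≫ v)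
      (b.hom ≫ Y.d n ≫ inv (ψ (n + 1))) (by rw [reassoc_of% hab, hqv, Category.assoc])
    obtain ⟨s, hs, -⟩ := exists_nullHomotopy_of_leftNExact hn hUc hYl (hφ.comp hψ) b.hom
      (by simp [hφ1])
    obtain ⟨r, hr, -⟩ := exists_nullHomotopy_of_rightNExact hn hSc hUr hφ
      (s 0 ≫ inv (ψ 0)) (by rw [← reassoc_of% hs.bot]; simp)
    refine ⟨b.inv ≫ r n, ?_⟩
    rw [Category.assoc, ← hr.top, hφ1, Iso.inv_hom_id_assoc]
  obtain ⟨φ, hφ, -, hφ1⟩ := exists_hom_of_leftNExact hY hSl l (inv (ψ (n + 1))) hl.symm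
  obtain ⟨s, hs, -⟩ := exists_nullHomotopy_of_leftNExact hn hY hYl (hφ.comp hψ).id_sub 0
    (by simp [hφ1])
  exact h𝒳.weakIsoClosed S hS Y ⟨hY, hYl, hSr.of_homotopy_retract hY hφ hψ hs⟩
    (Or.inl ⟨ψ, hψ, Or.inr ⟨h1, h0⟩⟩)

end Admissible

/-- Let `(M,𝒳)` be a small `n`-exact category and
`Y : Y⁰ → Y¹ → ⋯ → Yⁿ → Y^{n+1}` a complex in `M` such that every homology object of the
complex `0 → H_{Y⁰} → H_{Y¹} → ⋯ → H_{Y^{n+1}} → 0` of representable functors in `Mod(M)` is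
weakly effaceable (equivalently, the induced sequence is exact in the localization of `Mod(M)`
at the weakly effaceable functors).  Then `Y` is an `𝒳`-admissible `n`-exact sequence,
i.e. `Y ∈ 𝒳`. -/
theorem mem_of_homology_weakly_effaceable
    {M : Type u} [SmallCategory M] [Preadditive M] [HasFiniteBiproducts M]
    (n : ℕ) (hn : 1 ≤ n) (𝒳 : Set (NSeq M)) (h𝒳 : IsNExactStructure n 𝒳)
    (Y : NSeq M) (hcx : Y.IsComplex n)
    (heff : (repSeqOf n Y rfl rfl hcx).HomologyWeaklyEffaceable 𝒳) :
    Y ∈ 𝒳 := by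
  obtain ⟨h0, h1, h2⟩ := heff
  have hl : LeftNExact n Y := h𝒳.leftNExact_of_weaklyEffaceable hcx h0 h1
  obtain ⟨V, g, hg, y, hy⟩ := h2 (Y.X (n + 1)) (𝟙 (Y.X (n + 1)))
  replace hy : (show V ⟶ Y.X n from y) ≫ Y.d n = g :=
    Eq.trans hy (Category.comp_id g)
  obtain ⟨Z, hZ, a, b, hab⟩ := hg.exists_iso
  obtain ⟨ρ, hρ, -, hρ1⟩ := exists_hom_of_leftNExact (h𝒳.nExact Z hZ).1 hl
    (a.hom ≫ (show V ⟶ Y.X n from y)) b.hom (by rw [hab, Category.assoc, hy])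
  obtain ⟨S, hS, ψ, hψ, hψ0, hψ1⟩ := h𝒳.exists_pushout_mem hn hZ hcx hρ
    (by rw [hρ1]; infer_instance)
  exact h𝒳.mem_of_isIso_ends hn hS hcx hl hψ hψ0 hψ1

end NExactCat
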